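/- For the weighted directed cycle digraph with all weights positive, let Q be the n×n real matrix whose first n−1 rows are the rows of Eτᵀ and whose last row is the row vector (1/w 0, 1/w 1, …, 1/w (n−1)) (i.e., 1ₙᵀ * W⁻¹). Then Q is invertible and Q * Lg * Q⁻¹ equals the block-diagonal matrix diag(Eτᵀ * W * Rᵀ, 0), i.e., the n×n matrix whose upper-left (n−1)×(n−1) block is Eτᵀ * W * Rᵀ and all of whose remaining entries are zero. -/

import Mathlib

open Matrix

theorem cycle_aux
    (m : ℕ) (hm : 1 ≤ m) (w : Fin (m+1) → ℝ) (hw : ∀ i, 0 < w i)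
    (E : Matrix (Fin (m+1)) (Fin (m+1)) ℝ)
    (hE : ∀ v i, E v i = if v = i then 1 else if v = i + ⟨1, by omega⟩ then -1 else 0)
    (W : Matrix (Fin (m+1)) (Fin (m+1)) ℝ)
    (Eτ : Matrix (Fin (m+1)) (Fin m) ℝ)
    (hEτ : Eτ = E.submatrix id Fin.castSucc)
    (Ec : Matrix (Fin (m+1)) (Fin 1) ℝ)
    (hEc : Ec = E.submatrix id (fun _ => Fin.last m))
    (hW : W = Matrix.diagonal w)
    (Tτ : Matrix (Fin m) (Fin 1) ℝ)
    (hTτ : Tτ = (Eτᵀ * Eτ)⁻¹ * Eτᵀ * Ec)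
    (R : Matrix (Fin m) (Fin (m+1)) ℝ)
    (hR : ∀ (i : Fin m) (j : Fin (m+1)), R i j =
      if h : j.val < m then (if i.val = j.val then 1 else 0) else Tτ i 0)
    (Q : Matrix (Fin (m+1)) (Fin (m+1)) ℝ)
    (hQ : ∀ (i j : Fin (m+1)), Q i j =
      if h : i.val < m then Eτᵀ ⟨i.val, h⟩ j else 1 / w j) :
    IsUnit Q ∧
    ∀ (i j : Fin (m+1)), (Q * (W * Eᵀ) * Q⁻¹) i j =
      if hi : i.val < m then
        (if hj : j.val < m then (Eτᵀ * W * Rᵀ) ⟨i.val, hi⟩ ⟨j.val, hj⟩ else 0)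
      else 0 := by
  have h1 : (⟨1, by omega⟩ : Fin (m+1)) = 1 := by
    ext; exact (Nat.mod_eq_of_lt (by omega : 1 < m + 1)).symm
  have hB : ∀ v i, Eτ v i = (if v = Fin.castSucc i then 1 else 0) -
      (if v = Fin.succ i then 1 else 0) := by
    intro v i
    rw [hEτ, submatrix_apply, hE, h1, Fin.coeSucc_eq_succ]
    have := (Fin.castSucc_lt_succ (i := i)).ne
    simp only [id]
    split_ifs <;> simp_all
  have hmul : ∀ (x : Fin (m+1) → ℝ) i, ∑ v, Eτ v i * x v = x i.castSucc - x i.succ := by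
    intro x i
    simp [hB, sub_mul, Finset.sum_sub_distrib]
  have hrow : ∀ v, ∑ i, E v i = 0 := by
    intro v
    have : ∀ i, E v i = (if v = i then 1 else 0) - (if v - 1 = i then 1 else 0) := by
      intro i
      rw [hE, h1]
      have hne : (1 : Fin (m+1)) ≠ 0 := by
        rw [← h1]; simp [Fin.ext_iff]
      have e : v = i + 1 ↔ v - 1 = i := by rw [sub_eq_iff_eq_add]
      simp only [e]
      by_cases h : v = i
      · subst h; simp [hne]
      · simp [h]; split_ifs <;> simp
    simp [this]
  have hinj : ∀ y : Fin m → ℝ, Eτ *ᵥ y = 0 → y = 0 := by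
    intro y hy
    ext k
    have h2 : (fun v : Fin (m+1) => if v ≤ k.castSucc then (1:ℝ) else 0) ⬝ᵥ (Eτ *ᵥ y) = 0 := by
      rw [hy]; simp
    rw [dotProduct_mulVec] at h2
    have h3 : (fun v : Fin (m+1) => if v ≤ k.castSucc then (1:ℝ) else 0) ᵥ* Eτ
        = Pi.single k 1 := by
      ext i
      simp only [vecMul, dotProduct]
      simp_rw [mul_comm _ (Eτ _ i)]
      rw [hmul]
      simp only [Fin.le_def, Fin.val_castSucc, Fin.val_succ, Pi.single_apply, Fin.ext_iff]
      split_ifs <;> first | omega | simp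
    rw [h3] at h2
    simpa using h2
  have hG : IsUnit (Eτᵀ * Eτ) := by
    rw [← mulVec_injective_iff_isUnit]
    intro a b hab
    have : (Eτᵀ * Eτ) *ᵥ (a - b) = 0 := by
      rw [mulVec_sub]; exact sub_eq_zero.2 hab
    have h2 : (Eτ *ᵥ (a-b)) ⬝ᵥ (Eτ *ᵥ (a-b)) = 0 := by
      rw [dotProduct_mulVec, ← mulVec_transpose, mulVec_mulVec, this]; simp
    exact sub_eq_zero.1 (hinj _ (dotProduct_self_eq_zero.1 h2))
  have hEc' : Ec = Eτ * (Matrix.of fun _ _ => -1 : Matrix (Fin m) (Fin 1) ℝ) := by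
    ext v j
    have := hrow v
    rw [Fin.sum_univ_castSucc] at this
    simp only [hEc, hEτ, mul_apply, submatrix_apply, of_apply, id, mul_neg, mul_one, Finset.sum_neg_distrib]
    linarith
  have hT : Tτ = Matrix.of fun _ _ => -1 := by
    rw [hTτ, hEc', Matrix.mul_assoc, ← Matrix.mul_assoc Eτᵀ, ← Matrix.mul_assoc,
      nonsing_inv_mul _ ((isUnit_iff_isUnit_det _).1 hG), Matrix.one_mul]
  have hER : E = Eτ * R := by
    ext v j
    refine Fin.lastCases ?_ (fun j => ?_) j
    · have := congrFun (congrFun hEc' v) 0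
      rw [hEc] at this
      simp only [mul_apply, submatrix_apply, id] at this ⊢
      rw [this]
      simp [hR, hT]
    · simp [mul_apply, hR, ← Fin.ext_iff, hEτ]
  have hQu : IsUnit Q := by
    rw [← mulVec_injective_iff_isUnit]
    intro a b hab
    have hz : Q *ᵥ (a - b) = 0 := by
      rw [mulVec_sub]; exact sub_eq_zero.2 hab
    refine sub_eq_zero.1 ?_
    generalize a - b = x at hz
    have hs : ∀ i : Fin m, x i.succ = x i.castSucc := by
      intro i
      have := congrFun hz i.castSucc
      simp only [mulVec, dotProduct, hQ, Fin.val_castSucc, i.2, dite_true, transpose_apply,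
        Fin.eta, hmul, Pi.zero_apply] at this
      linarith
    have hc : ∀ i, x i = x 0 := by
      intro i
      induction i using Fin.induction with
      | zero => rfl
      | succ i ih => rw [hs, ih]
    have hl := congrFun hz (Fin.last m)
    simp only [mulVec, dotProduct, hQ, Fin.val_last, lt_irrefl, dite_false, Pi.zero_apply] at hl
    simp_rw [hc] at hl
    rw [← Finset.sum_mul] at hl
    have hp : 0 < ∑ i, 1 / w i :=
      Finset.sum_pos (fun i _ => one_div_pos.2 (hw i)) ⟨0, Finset.mem_univ _⟩
    ext i
    rw [hc]
    exact (mul_eq_zero.1 hl).resolve_left hp.ne'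
  refine ⟨hQu, ?_⟩
  let D : Matrix (Fin (m+1)) (Fin (m+1)) ℝ := fun i j =>
      if hi : i.val < m then
        (if hj : j.val < m then (Eτᵀ * W * Rᵀ) ⟨i.val, hi⟩ ⟨j.val, hj⟩ else 0)
      else 0
  have key : Q * (W * Eᵀ) = D * Q := by
    ext i j
    refine Fin.lastCases ?_ (fun i => ?_) i
    · have : ∀ k, 1 / w k * (w k * E j k) = E j k := by
        intro k; have := (hw k).ne'; field_simp
      rw [Matrix.mul_apply, Matrix.mul_apply]
      simp only [hW, diagonal_mul, transpose_apply, hQ]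
      simp only [D, Fin.val_last, lt_irrefl, dite_false, this, hrow, zero_mul,
        Finset.sum_const_zero]
    · have e1 : (Q * (W * Eᵀ)) i.castSucc j = (Eτᵀ * (W * Eᵀ)) i j := by
        rw [mul_apply, mul_apply]; simp [hQ]
      have e2 : (D * Q) i.castSucc j = ((Eτᵀ * W * Rᵀ) * Eτᵀ) i j := by
        rw [mul_apply, mul_apply, Fin.sum_univ_castSucc]; simp [hQ, D]
      rw [e1, e2, hER, transpose_mul]
      simp only [Matrix.mul_assoc]
  intro i j
  rw [key, Matrix.mul_assoc, mul_nonsing_inv _ ((isUnit_iff_isUnit_det _).1 hQu), Matrix.mul_one]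

/-- For the weighted directed cycle digraph with positive weights, the
graph Laplacian `Lg = A * W * Eᵀ` is similar, via the matrix `Q` with rows `Eτᵀ` and
`1ₙᵀ W⁻¹`, to the block diagonal matrix `diag(Eτᵀ * W * Rᵀ, 0)`. -/
theorem cycle_graphLaplacian_similar_block_diagonal
    (n : ℕ) (hn : 2 ≤ n) (w : Fin n → ℝ) (hw : ∀ i, 0 < w i)
    (E : Matrix (Fin n) (Fin n) ℝ)
    (hE : ∀ v i, E v i = if v = i then 1 else if v = i + ⟨1, by omega⟩ then -1 else 0)
    (A : Matrix (Fin n) (Fin n) ℝ) (hA : A = 1)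
    (W : Matrix (Fin n) (Fin n) ℝ) (hW : W = Matrix.diagonal w)
    (Lg : Matrix (Fin n) (Fin n) ℝ) (hLg : Lg = A * W * Eᵀ)
    (Eτ : Matrix (Fin n) (Fin (n - 1)) ℝ)
    (hEτ : Eτ = E.submatrix id
      (fun i : Fin (n - 1) => ⟨i.val, lt_of_lt_of_le i.2 (Nat.sub_le n 1)⟩))
    (Ec : Matrix (Fin n) (Fin 1) ℝ)
    (hEc : Ec = E.submatrix id (fun _ => ⟨n - 1, by omega⟩))
    (Tτ : Matrix (Fin (n - 1)) (Fin 1) ℝ)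
    (hTτ : Tτ = (Eτᵀ * Eτ)⁻¹ * Eτᵀ * Ec)
    (R : Matrix (Fin (n - 1)) (Fin n) ℝ)
    (hR : ∀ (i : Fin (n - 1)) (j : Fin n), R i j =
      if h : j.val < n - 1 then (if i.val = j.val then 1 else 0) else Tτ i 0)
    (Q : Matrix (Fin n) (Fin n) ℝ)
    (hQ : ∀ (i j : Fin n), Q i j =
      if h : i.val < n - 1 then Eτᵀ ⟨i.val, h⟩ j else 1 / w j) :
    IsUnit Q ∧
    ∀ (i j : Fin n), (Q * Lg * Q⁻¹) i j =
      if hi : i.val < n - 1 then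
        (if hj : j.val < n - 1 then (Eτᵀ * W * Rᵀ) ⟨i.val, hi⟩ ⟨j.val, hj⟩ else 0)
      else 0 := by
  obtain ⟨m, rfl⟩ : ∃ m, n = m + 1 := ⟨n - 1, by omega⟩
  subst hA
  rw [Matrix.one_mul] at hLg
  subst hLg
  exact cycle_aux m (by omega) w hw E hE W Eτ hEτ Ec hEc hW Tτ hTτ R hR Q hQ
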